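/- Subfunction bound for bounded-error probabilistic k-OBDDs (Theorem th-main3-small): For every δ with 0 < δ < 1/2 there exist constants C₁ > 0 and C₂ > 0 such that for all n ≥ 2, k ≥ 1, w ≥ 2 and every f : {0,1}^n → {0,1}: if f is computed with bounded error δ by a k-POBDD of width w (with some order θ), then N(f) ≤ (C₁·k·(C₂ + log₂ w + log₂ k))^{(k+1)·w²}. -/

import Mathlib

/-- The variable index read at level `m` of a `k`-layer ordered BDD with order `θ`. -/
def varIdx {n : ℕ} (k : ℕ) (θ : Equiv.Perm (Fin n)) (m : Fin (k * n)) : Fin n :=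
  θ ⟨m.val % n, Nat.mod_lt _ (Nat.pos_of_ne_zero (fun h => absurd m.isLt (by subst h; simp)))⟩

/-- A probabilistic ordered read-`k`-times branching program (`k`-POBDD) of width `w` over
`n` Boolean variables: at each node, for each value of the read bit, the next node is
chosen according to a probability distribution over the nodes of the next level. -/
structure KPOBDD (n k w : ℕ) where
  order : Equiv.Perm (Fin n)
  trans : Fin (k * n) → Fin w → Bool → Fin w → ℝ
  trans_nonneg : ∀ m v b v', 0 ≤ trans m v b v'
  trans_sum : ∀ m v b, ∑ v', trans m v b v' = 1
  start : Fin w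
  accept : Finset (Fin w)

/-- The probability distribution over the nodes of level `m` reached by the `k`-POBDD `P`
on input `ν`. -/
noncomputable def KPOBDD.dist {n k w : ℕ} (P : KPOBDD n k w) (ν : Fin n → Bool) :
    ℕ → Fin w → ℝ
  | 0 => fun v => if v = P.start then 1 else 0
  | m + 1 => fun v' =>
    if h : m < k * n then
      ∑ v, P.dist ν m v * P.trans ⟨m, h⟩ v (ν (varIdx k P.order ⟨m, h⟩)) v'
    else P.dist ν m v'

/-- The probability that the `k`-POBDD `P` reaches an accepting node on input `ν`. -/
noncomputable def KPOBDD.acceptProb {n k w : ℕ} (P : KPOBDD n k w) (ν : Fin n → Bool) : ℝ :=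
  ∑ v ∈ P.accept, P.dist ν (k * n) v

/-- The `k`-POBDD `P` computes `f` with bounded error `δ`: inputs with `f ν = 1` are
accepted with probability greater than `1/2 + δ`, and inputs with `f ν = 0` are accepted
with probability less than `1/2 - δ`. -/
def KPOBDD.ComputesBE {n k w : ℕ} (P : KPOBDD n k w) (δ : ℝ)
    (f : (Fin n → Bool) → Bool) : Prop :=
  ∀ ν : Fin n → Bool,
    (f ν = true → P.acceptProb ν > 1 / 2 + δ) ∧
    (f ν = false → P.acceptProb ν < 1 / 2 - δ)

/-- Merge an assignment `σ` to the variables in `A` with an assignment `γ` to the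
variables outside `A` into a full assignment. -/
def mergeAssign {n : ℕ} (A : Finset (Fin n)) (σ : {i : Fin n // i ∈ A} → Bool)
    (γ : {i : Fin n // i ∉ A} → Bool) : Fin n → Bool :=
  fun i => if h : i ∈ A then σ ⟨i, h⟩ else γ ⟨i, h⟩

/-- `N^π(f)`: the number of distinct subfunctions `γ ↦ f(σ,γ)` of `f` with respect to
the partition `π = (A, Aᶜ)` of the variables. -/
def NsubA {n : ℕ} (f : (Fin n → Bool) → Bool) (A : Finset (Fin n)) : ℕ :=
  (Finset.univ.image fun σ : {i : Fin n // i ∈ A} → Bool =>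
    fun γ : {i : Fin n // i ∉ A} → Bool => f (mergeAssign A σ γ)).card

/-- `N^θ(f)`: the maximum of `N^π(f)` over all partitions `π` agreeing with the order `θ`,
i.e. with `X_A = {x_{θ(1)}, …, x_{θ(u)}}` for some `1 ≤ u ≤ n - 1`. -/
def NsubTheta {n : ℕ} (f : (Fin n → Bool) → Bool) (θ : Equiv.Perm (Fin n)) : ℕ :=
  (Finset.Icc 1 (n - 1)).sup fun u =>
    NsubA f (Finset.univ.filter fun i : Fin n => ((θ.symm i : Fin n) : ℕ) < u)

/-- `N(f)`: the minimum of `N^θ(f)` over all orders `θ`. -/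
def Nmin {n : ℕ} (f : (Fin n → Bool) → Bool) : ℕ :=
  Finset.univ.inf' Finset.univ_nonempty fun θ : Equiv.Perm (Fin n) => NsubTheta f θ

/-!
Cut the variable order after its first `u` variables. The transition matrix of each of the `k`
layers is then the product of a stochastic prefix matrix, which depends only on the variables before
the cut, and a stochastic suffix matrix, which depends only on the variables after it. Round the
`k * w ^ 2` entries of the prefix matrices on a logarithmic scale of resolution `η`, identifying all
entries below a threshold `s`. Two assignments before the cut with the same rounding have prefix
matrices whose rows are at `ℓ¹`-distance at most `4 * η + 3 * s * w`; since stochastic matrices do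
not increase `ℓ¹`-distances, the final distributions then differ by at most `k` times this amount.
With `η = δ / (4 * k)` and `s = δ / (3 * w * k)` this is `2 * δ`, too little to cross the gap
between acceptance and rejection. Hence there are at most as many subfunctions as roundings, and the
grid has `O(log (1 / s) / η)` points.
-/

section Perturbation

open scoped Matrix

variable {R ι κ : Type*} [CommRing R] [LinearOrder R] [IsStrictOrderedRing R] [Fintype ι]
  [Fintype κ]

lemma sum_abs_vecMul_le (x : ι → R) {D : Matrix ι κ R} {ε : R} (hD : ∀ i, ∑ j, |D i j| ≤ ε) :
    ∑ j, |(x ᵥ* D) j| ≤ (∑ i, |x i|) * ε :=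
  calc ∑ j, |(x ᵥ* D) j|
    _ ≤ ∑ j, ∑ i, |x i| * |D i j| := by
      gcongr with j
      simp only [Matrix.vecMul, dotProduct, ← abs_mul]
      exact Finset.abs_sum_le_sum_abs _ _
    _ = ∑ i, |x i| * ∑ j, |D i j| := by simp only [Finset.sum_comm (γ := κ), Finset.mul_sum]
    _ ≤ ∑ i, |x i| * ε := by gcongr with i; exact hD i
    _ = (∑ i, |x i|) * ε := (Finset.sum_mul ..).symm

lemma sum_abs_eq_one_of_mem_stdSimplex {x : ι → R} (hx : x ∈ stdSimplex R ι) :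
    ∑ i, |x i| = 1 := by
  simp only [abs_of_nonneg (hx.1 _), hx.2]

variable [DecidableEq ι]

lemma vecMul_mem_stdSimplex {x : ι → R} {M : Matrix ι ι R} (hx : x ∈ stdSimplex R ι)
    (hM : M ∈ Matrix.rowStochastic R ι) : x ᵥ* M ∈ stdSimplex R ι := by
  refine ⟨Matrix.nonneg_vecMul_of_mem_rowStochastic hM hx.1, ?_⟩
  rw [← dotProduct_one]
  exact Matrix.vecMul_dotProduct_one_eq_one_rowStochastic hM ((dotProduct_one x).trans hx.2)

lemma row_mem_stdSimplex {M : Matrix ι ι R} (hM : M ∈ Matrix.rowStochastic R ι) (i : ι) :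
    M i ∈ stdSimplex R ι :=
  ⟨fun _ => Matrix.nonneg_of_mem_rowStochastic hM, Matrix.sum_row_of_mem_rowStochastic hM i⟩

lemma sum_abs_vecMul_le_of_mem_rowStochastic (x : ι → R) {M : Matrix ι ι R}
    (hM : M ∈ Matrix.rowStochastic R ι) : ∑ j, |(x ᵥ* M) j| ≤ ∑ i, |x i| := by
  simpa only [mul_one] using sum_abs_vecMul_le x fun i =>
    (sum_abs_eq_one_of_mem_stdSimplex (row_mem_stdSimplex hM i)).le

lemma sum_abs_vecMul_sub_vecMul_le (p : ι → R) {q : ι → R} {M M' : Matrix ι ι R} {ε : R}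
    (hq : q ∈ stdSimplex R ι) (hM : M ∈ Matrix.rowStochastic R ι)
    (hMM' : ∀ i, ∑ j, |M i j - M' i j| ≤ ε) :
    ∑ j, |(p ᵥ* M) j - (q ᵥ* M') j| ≤ ∑ i, |p i - q i| + ε := by
  have split : p ᵥ* M - q ᵥ* M' = (p - q) ᵥ* M + q ᵥ* (M - M') := by
    rw [Matrix.sub_vecMul, Matrix.vecMul_sub, sub_add_sub_cancel]
  calc ∑ j, |(p ᵥ* M) j - (q ᵥ* M') j|
    _ = ∑ j, |((p - q) ᵥ* M) j + (q ᵥ* (M - M')) j| := by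
      simp only [← Pi.sub_apply, ← Pi.add_apply, split]
    _ ≤ ∑ j, |((p - q) ᵥ* M) j| + ∑ j, |(q ᵥ* (M - M')) j| := by
      rw [← Finset.sum_add_distrib]
      gcongr
      exact abs_add_le _ _
    _ ≤ ∑ i, |p i - q i| + (∑ i, |q i|) * ε := by
      exact add_le_add (sum_abs_vecMul_le_of_mem_rowStochastic (p - q) hM)
        (sum_abs_vecMul_le (D := M - M') q hMM')
    _ = ∑ i, |p i - q i| + ε := by rw [sum_abs_eq_one_of_mem_stdSimplex hq, one_mul]

lemma sum_abs_sub_le_of_vecMul_recurrence {k : ℕ} {p q : ℕ → ι → R} {M M' : ℕ → Matrix ι ι R}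
    {ε : R} (hp : ∀ i < k, p (i + 1) = p i ᵥ* M i) (hq : ∀ i < k, q (i + 1) = q i ᵥ* M' i)
    (hqs : ∀ i < k, q i ∈ stdSimplex R ι) (hM : ∀ i < k, M i ∈ Matrix.rowStochastic R ι)
    (hMM' : ∀ i < k, ∀ a, ∑ b, |M i a b - M' i a b| ≤ ε) :
    ∑ a, |p k a - q k a| ≤ ∑ a, |p 0 a - q 0 a| + k * ε := by
  induction k with
  | zero => simp
  | succ k ih =>
    calc ∑ a, |p (k + 1) a - q (k + 1) a|
      _ ≤ ∑ a, |p k a - q k a| + ε := by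
        rw [hp k k.lt_succ_self, hq k k.lt_succ_self]
        exact sum_abs_vecMul_sub_vecMul_le _ (hqs k k.lt_succ_self) (hM k k.lt_succ_self)
          (hMM' k k.lt_succ_self)
      _ ≤ ∑ a, |p 0 a - q 0 a| + k * ε + ε := by
        gcongr
        exact ih (fun i hi => hp i (hi.trans k.lt_succ_self))
          (fun i hi => hq i (hi.trans k.lt_succ_self))
          (fun i hi => hqs i (hi.trans k.lt_succ_self))
          (fun i hi => hM i (hi.trans k.lt_succ_self))
          (fun i hi => hMM' i (hi.trans k.lt_succ_self))
      _ = ∑ a, |p 0 a - q 0 a| + (k + 1 : ℕ) * ε := by push_cast; ring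

end Perturbation

section LogBucket

/-- The cell of `x ≥ 0` in the logarithmic grid with threshold `s` and resolution `η`: cell `0`
contains `[0, s]`, and the endpoints of each cell above `s` have ratio `exp η`. -/
noncomputable def logBucket (s η x : ℝ) : ℕ :=
  ⌊Real.posLog (x / s) / η⌋₊

variable {s η x y : ℝ}

lemma logBucket_le_logBucket (hs : 0 ≤ s) (hη : 0 ≤ η) (hx : 0 ≤ x) (hxy : x ≤ y) :
    logBucket s η x ≤ logBucket s η y := by
  unfold logBucket
  gcongr

lemma posLog_div_lt_of_logBucket_eq (hη : 0 < η) (h : logBucket s η x = logBucket s η y) :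
    Real.posLog (x / s) < Real.posLog (y / s) + η := by
  have hlt : Real.posLog (x / s) / η < Real.posLog (y / s) / η + 1 :=
    calc Real.posLog (x / s) / η < logBucket s η x + 1 := Nat.lt_floor_add_one _
      _ = logBucket s η y + 1 := by rw [h]
      _ ≤ Real.posLog (y / s) / η + 1 := by
        gcongr
        exact Nat.floor_le (div_nonneg Real.posLog_nonneg hη.le)
  rwa [div_add_one hη.ne', div_lt_div_iff_of_pos_right hη] at hlt

lemma le_of_logBucket_eq (hs : 0 < s) (hη : 0 < η) (hη1 : η ≤ 1) (hx : 0 ≤ x) (hy : 0 ≤ y)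
    (h : logBucket s η x = logBucket s η y) : x ≤ (y + s) * (1 + 2 * η) := by
  have hlog := posLog_div_lt_of_logBucket_eq hη h
  rw [Real.posLog_eq_log_max_one (by positivity), Real.posLog_eq_log_max_one (by positivity)]
    at hlog
  have hmax : max 1 (x / s) ≤ max 1 (y / s) * Real.exp η := by
    rw [← Real.log_le_log_iff (by positivity) (by positivity),
      Real.log_mul (by positivity) (by positivity), Real.log_exp]
    exact hlog.le
  have hexp : Real.exp η ≤ 1 + 2 * η := by
    have := (abs_le.1 (Real.abs_exp_sub_one_le (abs_le.2 ⟨by linarith, hη1⟩))).2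
    rw [abs_of_pos hη] at this
    linarith
  have hmax_le : max 1 (y / s) ≤ (y + s) / s := by
    rw [add_div, div_self hs.ne']
    exact max_le (le_add_of_nonneg_left (by positivity)) (by linarith)
  have : x / s ≤ (y + s) / s * (1 + 2 * η) :=
    (le_max_right _ _).trans (hmax.trans (by gcongr))
  rwa [div_mul_eq_mul_div, div_le_div_iff_of_pos_right hs] at this

lemma abs_sub_le_of_logBucket_eq (hs : 0 < s) (hη : 0 < η) (hη1 : η ≤ 1) (hx : 0 ≤ x)
    (hy : 0 ≤ y) (h : logBucket s η x = logBucket s η y) :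
    |x - y| ≤ 2 * η * (x + y) + 3 * s := by
  have hxy := le_of_logBucket_eq hs hη hη1 hx hy h
  have hyx := le_of_logBucket_eq hs hη hη1 hy hx h.symm
  have : η * s ≤ s := mul_le_of_le_one_left hs.le hη1
  have : 0 ≤ η * x := by positivity
  have : 0 ≤ η * y := by positivity
  rw [abs_le]
  constructor <;> linarith

lemma sum_abs_sub_le_of_logBucket_eq {ι : Type*} [Fintype ι] {p q : ι → ℝ}
    (hs : 0 < s) (hη : 0 < η) (hη1 : η ≤ 1) (hp : p ∈ stdSimplex ℝ ι) (hq : q ∈ stdSimplex ℝ ι)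
    (h : ∀ i, logBucket s η (p i) = logBucket s η (q i)) :
    ∑ i, |p i - q i| ≤ 4 * η + 3 * s * Fintype.card ι :=
  calc ∑ i, |p i - q i|
    _ ≤ ∑ i, (2 * η * (p i + q i) + 3 * s) := by
      gcongr with i
      exact abs_sub_le_of_logBucket_eq hs hη hη1 (hp.1 i) (hq.1 i) (h i)
    _ = 2 * η * (∑ i, p i + ∑ i, q i) + Fintype.card ι * (3 * s) := by
      rw [Finset.sum_add_distrib, ← Finset.mul_sum, Finset.sum_add_distrib, Finset.sum_const,
        Finset.card_univ, nsmul_eq_mul]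
    _ = 4 * η + 3 * s * Fintype.card ι := by rw [hp.2, hq.2]; ring

lemma log_le_logb_of_le_exp_one {b : ℝ} (hb : 1 < b) (hbe : b ≤ Real.exp 1) (hx : 1 ≤ x) :
    Real.log x ≤ Real.logb b x :=
  le_div_self (Real.log_nonneg hx) (Real.log_pos hb)
    ((Real.log_le_iff_le_exp (by linarith)).2 hbe)

lemma logBucket_one_add_one_le {δ k w : ℝ} (hδ0 : 0 < δ) (hδ3 : δ ≤ 3) (hk : 1 ≤ k)
    (hw : 1 ≤ w) :
    (logBucket (δ / (3 * w * k)) (δ / (4 * k)) 1 : ℝ) + 1 ≤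
      4 / δ * k * (Real.logb 2 (3 / δ) + 1 + Real.logb 2 w + Real.logb 2 k) := by
  have hcount : 1 ≤ 4 / δ * k :=
    one_le_mul_of_one_le_of_one_le ((one_le_div hδ0).2 (by linarith)) hk
  have hgrid : 1 ≤ 3 / δ * w * k :=
    one_le_mul_of_one_le_of_one_le
      (one_le_mul_of_one_le_of_one_le ((one_le_div hδ0).2 hδ3) hw) hk
  have hlog : Real.posLog (3 / δ * w * k) ≤
      Real.logb 2 (3 / δ) + Real.logb 2 w + Real.logb 2 k := by
    rw [Real.posLog_eq_log (hgrid.trans (le_abs_self _)),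
      ← Real.logb_mul (by positivity) (by positivity),
      ← Real.logb_mul (by positivity) (by positivity)]
    exact log_le_logb_of_le_exp_one one_lt_two (by linarith [Real.exp_one_gt_d9]) hgrid
  calc (logBucket (δ / (3 * w * k)) (δ / (4 * k)) 1 : ℝ) + 1
    _ ≤ Real.posLog (1 / (δ / (3 * w * k))) / (δ / (4 * k)) + 1 := by
      gcongr
      exact Nat.floor_le (div_nonneg Real.posLog_nonneg (by positivity))
    _ = 4 / δ * k * Real.posLog (3 / δ * w * k) + 1 := by
      rw [show 1 / (δ / (3 * w * k)) = 3 / δ * w * k by field_simp]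
      field_simp
    _ ≤ 4 / δ * k * (Real.logb 2 (3 / δ) + Real.logb 2 w + Real.logb 2 k) + 4 / δ * k := by
      gcongr
    _ = 4 / δ * k * (Real.logb 2 (3 / δ) + 1 + Real.logb 2 w + Real.logb 2 k) := by ring

end LogBucket

section Subfunctions

variable {n k : ℕ}

lemma mergeAssign_apply_of_mem {A : Finset (Fin n)} (σ : {i // i ∈ A} → Bool)
    (γ : {i // i ∉ A} → Bool) {i : Fin n} (hi : i ∈ A) : mergeAssign A σ γ i = σ ⟨i, hi⟩ :=
  dif_pos hi

lemma mergeAssign_apply_of_notMem {A : Finset (Fin n)} (σ : {i // i ∈ A} → Bool)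
    (γ : {i // i ∉ A} → Bool) {i : Fin n} (hi : i ∉ A) : mergeAssign A σ γ i = γ ⟨i, hi⟩ :=
  dif_neg hi

lemma NsubA_le_card_of_dependsOn {β : Type*} {f : (Fin n → Bool) → Bool}
    {A : Finset (Fin n)} {c : (Fin n → Bool) → β} {T : Finset β} (hT : ∀ ν, c ν ∈ T)
    (hc : DependsOn c A)
    (hf : ∀ ν ν', c ν = c ν' → (∀ i ∉ A, ν i = ν' i) → f ν = f ν') :
    NsubA f A ≤ T.card := by
  classical
  let g := fun (σ : {i // i ∈ A} → Bool) (γ : {i // i ∉ A} → Bool) => f (mergeAssign A σ γ)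
  let c₀ := fun σ : {i // i ∈ A} → Bool => c (mergeAssign A σ fun _ => false)
  have hcA : ∀ σ γ, c (mergeAssign A σ γ) = c₀ σ := fun σ γ => hc fun i hi => by
    rw [mergeAssign_apply_of_mem σ _ hi, mergeAssign_apply_of_mem σ _ hi]
  have hg : g.FactorsThrough c₀ := fun σ σ' h => funext fun γ =>
    hf _ _ (by rw [hcA, hcA, h]) fun i hi => by
      rw [mergeAssign_apply_of_notMem _ γ hi, mergeAssign_apply_of_notMem _ γ hi]
  calc NsubA f A
    _ = ((Finset.univ.image c₀).image (Function.extend c₀ g fun _ _ => false)).card := by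
      rw [Finset.image_image, hg.extend_comp]; rfl
    _ ≤ (Finset.univ.image c₀).card := Finset.card_image_le
    _ ≤ T.card := Finset.card_le_card (Finset.image_subset_iff.2 fun _ _ => hT _)

/-- The set `X_A` of the first `u` variables in the order `θ`, in the form in which it occurs in
`NsubTheta`. -/
def firstVars (θ : Equiv.Perm (Fin n)) (u : ℕ) : Finset (Fin n) :=
  Finset.univ.filter fun i : Fin n => ((θ.symm i : Fin n) : ℕ) < u

lemma varIdx_mem_firstVars_iff {θ : Equiv.Perm (Fin n)} {u : ℕ} {m : Fin (k * n)} :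
    varIdx k θ m ∈ firstVars θ u ↔ m.val % n < u := by
  simp [firstVars, varIdx]

end Subfunctions

namespace KPOBDD

open scoped Matrix

variable {n k w : ℕ} (P : KPOBDD n k w)

/-- The transition matrix of level `m` on input `ν`; it is the identity beyond the last level, in
accordance with `KPOBDD.dist`. -/
noncomputable def stepMatrix (ν : Fin n → Bool) (m : ℕ) : Matrix (Fin w) (Fin w) ℝ :=
  if h : m < k * n then
    Matrix.of fun v v' => P.trans ⟨m, h⟩ v (ν (varIdx k P.order ⟨m, h⟩)) v'
  else 1

/-- The transition matrix of the `l` consecutive levels starting at level `a` on input `ν`. -/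
noncomputable def segmentMatrix (ν : Fin n → Bool) (a : ℕ) : ℕ → Matrix (Fin w) (Fin w) ℝ
  | 0 => 1
  | l + 1 => segmentMatrix ν a l * P.stepMatrix ν (a + l)

lemma stepMatrix_mem_rowStochastic (ν : Fin n → Bool) (m : ℕ) :
    P.stepMatrix ν m ∈ Matrix.rowStochastic ℝ (Fin w) := by
  unfold stepMatrix
  split_ifs
  · exact Matrix.mem_rowStochastic_iff_sum.2
      ⟨fun _ _ => P.trans_nonneg _ _ _ _, fun _ => P.trans_sum _ _ _⟩
  · exact one_mem _

lemma segmentMatrix_mem_rowStochastic (ν : Fin n → Bool) (a l : ℕ) :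
    P.segmentMatrix ν a l ∈ Matrix.rowStochastic ℝ (Fin w) := by
  induction l with
  | zero => exact one_mem _
  | succ l ih => exact mul_mem ih (P.stepMatrix_mem_rowStochastic ν _)

lemma segmentMatrix_add (ν : Fin n → Bool) (a l l' : ℕ) :
    P.segmentMatrix ν a (l + l') = P.segmentMatrix ν a l * P.segmentMatrix ν (a + l) l' := by
  induction l' with
  | zero => exact (mul_one _).symm
  | succ l' ih => rw [← add_assoc, segmentMatrix, ih, segmentMatrix, mul_assoc, add_assoc a]

lemma dist_succ (ν : Fin n → Bool) (m : ℕ) :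
    P.dist ν (m + 1) = P.dist ν m ᵥ* P.stepMatrix ν m := by
  funext v
  simp only [dist, stepMatrix]
  split_ifs
  · rfl
  · rw [Matrix.vecMul_one]

lemma dist_add (ν : Fin n → Bool) (a l : ℕ) :
    P.dist ν (a + l) = P.dist ν a ᵥ* P.segmentMatrix ν a l := by
  induction l with
  | zero => exact (Matrix.vecMul_one _).symm
  | succ l ih => rw [← add_assoc, dist_succ, ih, Matrix.vecMul_vecMul, segmentMatrix]

lemma dist_mem_stdSimplex (ν : Fin n → Bool) (m : ℕ) : P.dist ν m ∈ stdSimplex ℝ (Fin w) := by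
  induction m with
  | zero => simpa only [dist, eq_comm] using ite_eq_mem_stdSimplex ℝ P.start
  | succ m ih =>
    rw [dist_succ]
    exact vecMul_mem_stdSimplex ih (P.stepMatrix_mem_rowStochastic ν m)

lemma dependsOn_segmentMatrix {S : Set (Fin n)} {a l : ℕ}
    (hS : ∀ j < l, ∀ h : a + j < k * n, varIdx k P.order ⟨a + j, h⟩ ∈ S) :
    DependsOn (fun ν => P.segmentMatrix ν a l) S := by
  intro ν ν' hν
  induction l with
  | zero => rfl
  | succ l ih =>
    have hstep : P.stepMatrix ν (a + l) = P.stepMatrix ν' (a + l) := by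
      unfold stepMatrix
      split_ifs with h
      · rw [hν _ (hS l l.lt_succ_self h)]
      · rfl
    have hinit : P.segmentMatrix ν a l = P.segmentMatrix ν' a l :=
      ih fun j hj => hS j (hj.trans l.lt_succ_self)
    simp only [segmentMatrix, hinit, hstep]

lemma dependsOn_segmentMatrix_firstVars {u : ℕ} (hu : u ≤ n) (i : ℕ) :
    DependsOn (fun ν => P.segmentMatrix ν (i * n) u) (firstVars P.order u : Set (Fin n)) :=
  P.dependsOn_segmentMatrix fun j hj h => by
    rwa [Finset.mem_coe, varIdx_mem_firstVars_iff, Nat.mul_add_mod',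
      Nat.mod_eq_of_lt (hj.trans_le hu)]

lemma dependsOn_segmentMatrix_compl_firstVars {u : ℕ} (hu : u ≤ n) (i : ℕ) :
    DependsOn (fun ν => P.segmentMatrix ν (i * n + u) (n - u))
      (firstVars P.order u : Set (Fin n))ᶜ :=
  P.dependsOn_segmentMatrix fun j hj h => by
    rw [Set.mem_compl_iff, Finset.mem_coe, varIdx_mem_firstVars_iff, not_lt]
    simp only [add_assoc]
    rw [Nat.mul_add_mod', Nat.mod_eq_of_lt (by omega)]
    exact Nat.le_add_right u j

/-- The rounding of the transition matrices of the first `u` levels of each of the `k` layers to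
the logarithmic grid of `logBucket`. -/
noncomputable def prefixBuckets (s η : ℝ) (u : ℕ) (ν : Fin n → Bool) :
    Fin k × Fin w × Fin w → ℕ :=
  fun ⟨i, a, b⟩ => logBucket s η (P.segmentMatrix ν (i * n) u a b)

variable {P} {s η : ℝ} {u : ℕ} {ν ν' : Fin n → Bool}

lemma prefixBuckets_mem_piFinset (hs : 0 ≤ s) (hη : 0 ≤ η) (ν : Fin n → Bool) :
    P.prefixBuckets s η u ν ∈
      Fintype.piFinset fun _ => Finset.range (logBucket s η 1 + 1) :=
  Fintype.mem_piFinset.2 fun ⟨i, _, _⟩ => by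
    have hM := P.segmentMatrix_mem_rowStochastic ν (i * n) u
    exact Finset.mem_range_succ_iff.2 (logBucket_le_logBucket hs hη
      (Matrix.nonneg_of_mem_rowStochastic hM) (Matrix.le_one_of_mem_rowStochastic hM))

lemma dependsOn_prefixBuckets (hu : u ≤ n) :
    DependsOn (P.prefixBuckets s η u) (firstVars P.order u : Set (Fin n)) :=
  fun _ _ h => funext fun ⟨i, a, b⟩ =>
    congrArg (fun M : Matrix (Fin w) (Fin w) ℝ => logBucket s η (M a b))
      (P.dependsOn_segmentMatrix_firstVars hu i h)

lemma sum_abs_layer_sub_le_of_prefixBuckets_eq (hs : 0 < s) (hη : 0 < η) (hη1 : η ≤ 1)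
    (hu : u ≤ n) (hprefix : P.prefixBuckets s η u ν = P.prefixBuckets s η u ν')
    (hsuffix : ∀ j ∉ firstVars P.order u, ν j = ν' j) (i : Fin k) (a : Fin w) :
    ∑ b, |P.segmentMatrix ν (i * n) n a b - P.segmentMatrix ν' (i * n) n a b| ≤
      4 * η + 3 * s * w := by
  set A := P.segmentMatrix ν (i * n) u
  set A' := P.segmentMatrix ν' (i * n) u
  set B := P.segmentMatrix ν (i * n + u) (n - u)
  have hB : P.segmentMatrix ν' (i * n + u) (n - u) = B :=
    P.dependsOn_segmentMatrix_compl_firstVars hu i fun j hj => (hsuffix j hj).symm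
  have hν : P.segmentMatrix ν (i * n) n = A * B := by
    rw [← segmentMatrix_add, Nat.add_sub_cancel' hu]
  have hν' : P.segmentMatrix ν' (i * n) n = A' * B := by
    rw [← hB, ← segmentMatrix_add, Nat.add_sub_cancel' hu]
  calc ∑ b, |P.segmentMatrix ν (i * n) n a b - P.segmentMatrix ν' (i * n) n a b|
    _ = ∑ b, |((A a - A' a) ᵥ* B) b| := by
      simp only [hν, hν', Matrix.sub_vecMul, Pi.sub_apply, Matrix.mul_apply_eq_vecMul]
    _ ≤ ∑ b, |A a b - A' a b| :=
      sum_abs_vecMul_le_of_mem_rowStochastic _ (P.segmentMatrix_mem_rowStochastic ν _ _)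
    _ ≤ 4 * η + 3 * s * w := by
      simpa only [Fintype.card_fin] using sum_abs_sub_le_of_logBucket_eq hs hη hη1
        (row_mem_stdSimplex (P.segmentMatrix_mem_rowStochastic ν _ _) a)
        (row_mem_stdSimplex (P.segmentMatrix_mem_rowStochastic ν' _ _) a)
        fun b => congrFun hprefix (i, a, b)

lemma abs_acceptProb_sub_le (P : KPOBDD n k w) (ν ν' : Fin n → Bool) :
    |P.acceptProb ν - P.acceptProb ν'| ≤ ∑ v, |P.dist ν (k * n) v - P.dist ν' (k * n) v| := by
  rw [acceptProb, acceptProb, ← Finset.sum_sub_distrib]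
  exact (Finset.abs_sum_le_sum_abs _ _).trans
    (Finset.sum_le_univ_sum_of_nonneg fun _ => abs_nonneg _)

lemma abs_acceptProb_sub_le_of_prefixBuckets_eq (hs : 0 < s) (hη : 0 < η) (hη1 : η ≤ 1)
    (hu : u ≤ n) (hprefix : P.prefixBuckets s η u ν = P.prefixBuckets s η u ν')
    (hsuffix : ∀ j ∉ firstVars P.order u, ν j = ν' j) :
    |P.acceptProb ν - P.acceptProb ν'| ≤ k * (4 * η + 3 * s * w) := by
  have hlayer (ν : Fin n → Bool) (i : ℕ) :
      P.dist ν ((i + 1) * n) = P.dist ν (i * n) ᵥ* P.segmentMatrix ν (i * n) n := by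
    rw [add_one_mul, dist_add]
  have hdist := sum_abs_sub_le_of_vecMul_recurrence (k := k)
    (p := fun i => P.dist ν (i * n)) (q := fun i => P.dist ν' (i * n))
    (fun i _ => hlayer ν i) (fun i _ => hlayer ν' i)
    (fun i _ => P.dist_mem_stdSimplex ν' (i * n))
    (fun i _ => P.segmentMatrix_mem_rowStochastic ν (i * n) n)
    (fun i hi => sum_abs_layer_sub_le_of_prefixBuckets_eq hs hη hη1 hu hprefix hsuffix ⟨i, hi⟩)
  refine (P.abs_acceptProb_sub_le ν ν').trans (hdist.trans_eq ?_)
  simp [dist]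

lemma ComputesBE.eq_of_abs_acceptProb_sub_le {δ : ℝ} {f : (Fin n → Bool) → Bool}
    (hP : P.ComputesBE δ f) (h : |P.acceptProb ν - P.acceptProb ν'| ≤ 2 * δ) : f ν = f ν' := by
  obtain ⟨hle, hge⟩ := abs_le.1 h
  cases hν : f ν <;> cases hν' : f ν'
  · rfl
  · linarith [(hP ν).2 hν, (hP ν').1 hν']
  · linarith [(hP ν).1 hν, (hP ν').2 hν']
  · rfl

lemma ComputesBE.NsubTheta_order_le {δ : ℝ} {f : (Fin n → Bool) → Bool}
    (hP : P.ComputesBE δ f) (hs : 0 < s) (hη : 0 < η) (hη1 : η ≤ 1)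
    (hδ : k * (4 * η + 3 * s * w) ≤ 2 * δ) :
    NsubTheta f P.order ≤ (logBucket s η 1 + 1) ^ (k * w ^ 2) := by
  refine Finset.sup_le fun u hu => ?_
  have hun : u ≤ n := (Finset.mem_Icc.1 hu).2.trans (Nat.sub_le n 1)
  calc NsubA f (firstVars P.order u)
    _ ≤ (Fintype.piFinset fun _ : Fin k × Fin w × Fin w =>
          Finset.range (logBucket s η 1 + 1)).card :=
      NsubA_le_card_of_dependsOn (prefixBuckets_mem_piFinset hs.le hη.le)
        (dependsOn_prefixBuckets hun) fun _ _ hprefix hsuffix =>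
          hP.eq_of_abs_acceptProb_sub_le
            ((abs_acceptProb_sub_le_of_prefixBuckets_eq hs hη hη1 hun hprefix hsuffix).trans hδ)
    _ = (logBucket s η 1 + 1) ^ (k * w ^ 2) := by simp [sq]

end KPOBDD

/-- **Subfunction bound for bounded-error probabilistic `k`-OBDDs.** For every
`0 < δ < 1/2` there are constants `C₁, C₂ > 0` such that whenever `f : {0,1}^n → {0,1}`
(`n ≥ 2`) is computed with bounded error `δ` by a `k`-POBDD of width `w` (`k ≥ 1`,
`w ≥ 2`), we have `N(f) ≤ (C₁·k·(C₂ + log₂ w + log₂ k))^((k+1)·w²)`. -/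
theorem kpobdd_subfunction_bound (δ : ℝ) (hδ0 : 0 < δ) (hδ : δ < 1 / 2) :
    ∃ C₁ C₂ : ℝ, 0 < C₁ ∧ 0 < C₂ ∧
      ∀ (n k w : ℕ) (f : (Fin n → Bool) → Bool), 2 ≤ n → 1 ≤ k → 2 ≤ w →
        ∀ P : KPOBDD n k w, P.ComputesBE δ f →
          (Nmin f : ℝ) ≤
            (C₁ * k * (C₂ + Real.logb 2 w + Real.logb 2 k)) ^ ((k + 1) * w ^ 2) := by
  have hlog : 0 < Real.logb 2 (3 / δ) :=
    Real.logb_pos one_lt_two ((one_lt_div hδ0).2 (by linarith))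
  refine ⟨4 / δ, Real.logb 2 (3 / δ) + 1, by positivity, by positivity, ?_⟩
  intro n k w f _ hk hw P hP
  have hk1 : (1 : ℝ) ≤ k := by exact_mod_cast hk
  have hw1 : (1 : ℝ) ≤ w := by exact_mod_cast one_le_two.trans hw
  let s : ℝ := δ / (3 * w * k)
  let η : ℝ := δ / (4 * k)
  have hη1 : η ≤ 1 := div_le_one_of_le₀ (by linarith) (by positivity)
  have hδ_eq : k * (4 * η + 3 * s * w) = 2 * δ := by simp only [s, η]; field_simp; ring
  have hN : Nmin f ≤ (logBucket s η 1 + 1) ^ (k * w ^ 2) :=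
    (Finset.inf'_le _ (Finset.mem_univ P.order)).trans
      (hP.NsubTheta_order_le (by positivity) (by positivity) hη1 hδ_eq.le)
  calc (Nmin f : ℝ)
    _ ≤ ((logBucket s η 1 : ℝ) + 1) ^ (k * w ^ 2) := by exact_mod_cast hN
    _ ≤ ((logBucket s η 1 : ℝ) + 1) ^ ((k + 1) * w ^ 2) := by
      gcongr
      · exact le_add_of_nonneg_left (Nat.cast_nonneg _)
      · exact k.le_succ
    _ ≤ (4 / δ * k * (Real.logb 2 (3 / δ) + 1 + Real.logb 2 w + Real.logb 2 k)) ^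
          ((k + 1) * w ^ 2) := by
      gcongr
      exact logBucket_one_add_one_le hδ0 (by linarith) hk1 hw1
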